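/- arXiv:2004.08984 — 3 statements merged into one kernel-verified Lean document; each statement's English description precedes it below -/
import Mathlib

section
/- Let γ ∈ (0,1]. There is a constant C depending only on γ with the following property. Let h > 0 and let S be a Lebesgue-measurable set and P a tetrahedron with P ⊆ S ⊆ [0,h]³ and vol(P) ≥ γh³. Then for every p ∈ Q₁: ‖p‖_{L²([0,h]³)} ≤ C ‖p‖_{L²(S)}. Consequently ‖p‖_{L²(S)} ≤ ‖p‖_{L²([0,h]³)} ≤ C ‖p‖_{L²(S)}, i.e., the L² norms of trilinear polynomials over S and over the whole cube are equivalent with constants independent of h and of the position of S. (This is the norm equivalence of Lemma 4.1, on any subelement of an interface cube that contains a tetrahedron of volume proportional to the element volume.) -/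
/-!
The tetrahedron matters only through its volume: the estimate holds for every measurable
`S ⊆ [0,h]³` with `vol S ≥ γ h³`. After the substitution `X ↦ h X`, which preserves `Q₁`, the cube
is the unit cube.

The zero set of a nonzero trilinear polynomial is null (`triPoly_ae_ne_zero`), so by continuity
from above each such polynomial has a small sublevel set `{|p| ≤ δ}` of volume at most `γ / 2`. Nearby
coefficient vectors give uniformly close polynomials on the unit cube, so compactness of the unit
sphere of coefficients makes `δ` uniform (`exists_uniform_sublevel`). Hence `|p| ≥ δ ‖a‖` on a part
of `S` of volume at least `γ / 2`, while `|p| ≤ 8 ‖a‖` on the whole cube, `a` being the coefficient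
vector of `p` (`unit_cube_bound`).
-/

open MeasureTheory
open scoped RealInnerProductSpace ENNReal

noncomputable section

abbrev V3 : Type := EuclideanSpace ℝ (Fin 3)

/-- `Q₁`: the space of trilinear polynomials on `ℝ³`. -/
def IsQ1 (p : V3 → ℝ) : Prop :=
  ∃ a₀ a₁ a₂ a₃ a₄ a₅ a₆ a₇ : ℝ, ∀ x : V3,
    p x = a₀ + a₁ * x 0 + a₂ * x 1 + a₃ * x 2
      + a₄ * (x 0 * x 1) + a₅ * (x 0 * x 2) + a₆ * (x 1 * x 2)
      + a₇ * (x 0 * x 1 * x 2)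

/-- The cube `T = [0,h]³`. -/
def cube (h : ℝ) : Set V3 := {X | ∀ i, X i ∈ Set.Icc (0:ℝ) h}

/-- `P` is a tetrahedron: the convex hull of four affinely independent points. -/
def IsTetra (P : Set V3) : Prop :=
  ∃ v : Fin 4 → V3, AffineIndependent ℝ v ∧ P = convexHull ℝ (Set.range v)

/-- The extension operator `C_T(p) = p + (β⁻/β⁺ − 1)(∇p(F)·n̄) L`, `L(X) = (X−F)·n̄`. -/
def CT (βm βp : ℝ) (F nbar : V3) (p : V3 → ℝ) : V3 → ℝ :=
  fun X => p X + (βm / βp - 1) * (fderiv ℝ p F nbar) * ⟪X - F, nbar⟫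

/-- `f` is a closed face of the cube `[0,h]³` with unit normal `nf`. -/
def IsFace (h : ℝ) (f : Set V3) (nf : V3) : Prop :=
  ∃ i : Fin 3, (nf = EuclideanSpace.single i 1 ∨ nf = -EuclideanSpace.single i 1) ∧
    (f = {X ∈ cube h | X i = 0} ∨ f = {X ∈ cube h | X i = h})

/-! ### Trilinear polynomials by coefficients -/

/-- The trilinear polynomial on `ℝ³` with coefficient vector `a`, in the basis
`1, x, y, z, xy, xz, yz, xyz`. The coefficient space `Fin 8 → ℝ` carries the sup norm. -/
def triPoly (a : Fin 8 → ℝ) (x : V3) : ℝ :=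
  a 0 + a 1 * x 0 + a 2 * x 1 + a 3 * x 2
    + a 4 * (x 0 * x 1) + a 5 * (x 0 * x 2) + a 6 * (x 1 * x 2)
    + a 7 * (x 0 * x 1 * x 2)

lemma continuous_triPoly (a : Fin 8 → ℝ) : Continuous (triPoly a) := by
  unfold triPoly; fun_prop

lemma triPoly_sub (a b : Fin 8 → ℝ) (x : V3) :
    triPoly (a - b) x = triPoly a x - triPoly b x := by
  simp only [triPoly, Pi.sub_apply]; ring

lemma triPoly_smul (c : ℝ) (a : Fin 8 → ℝ) (x : V3) :
    triPoly (c • a) x = c * triPoly a x := by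
  simp only [triPoly, Pi.smul_apply, smul_eq_mul]; ring

lemma isCompact_cube (h : ℝ) : IsCompact (cube h) := by
  have : cube h = (PiLp.homeomorph 2 (fun _ : Fin 3 => ℝ)) ⁻¹'
      (Set.Icc (fun _ => 0) (fun _ => h)) := by
    ext x
    simp only [cube, Set.mem_Icc, Set.mem_ofPred_eq, Set.mem_preimage, Pi.le_def]
    exact ⟨fun H => ⟨fun i => (H i).1, fun i => (H i).2⟩, fun H i => ⟨H.1 i, H.2 i⟩⟩
  rw [this, Homeomorph.isCompact_preimage]
  exact isCompact_Icc

lemma abs_triPoly_le (a : Fin 8 → ℝ) {x : V3} (hx : x ∈ cube 1) :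
    |triPoly a x| ≤ 8 * ‖a‖ := by
  have hc : ∀ i, |a i| ≤ ‖a‖ := fun i => norm_le_pi_norm a i
  have key : ∀ (i : Fin 8) (t : ℝ), 0 ≤ t → t ≤ 1 → |a i * t| ≤ ‖a‖ := fun i t h0 h1 => by
    rw [abs_mul, abs_of_nonneg h0]
    exact (mul_le_of_le_one_right (abs_nonneg _) h1).trans (hc i)
  obtain ⟨x0, x1⟩ := hx 0
  obtain ⟨y0, y1⟩ := hx 1
  obtain ⟨z0, z1⟩ := hx 2
  have k0 := abs_le.1 (hc 0)
  have k1 := abs_le.1 (key 1 _ x0 x1)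
  have k2 := abs_le.1 (key 2 _ y0 y1)
  have k3 := abs_le.1 (key 3 _ z0 z1)
  have k4 := abs_le.1 (key 4 _ (mul_nonneg x0 y0) (mul_le_one₀ x1 y0 y1))
  have k5 := abs_le.1 (key 5 _ (mul_nonneg x0 z0) (mul_le_one₀ x1 z0 z1))
  have k6 := abs_le.1 (key 6 _ (mul_nonneg y0 z0) (mul_le_one₀ y1 z0 z1))
  have k7 := abs_le.1 (key 7 _ (mul_nonneg (mul_nonneg x0 y0) z0)
    (mul_le_one₀ (mul_le_one₀ x1 y0 y1) z0 z1))
  unfold triPoly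
  rw [abs_le]
  constructor <;> linarith [k0.1, k0.2]

/-! ### Zero sets are null -/

lemma affine_ae_ne_zero {c d : ℝ} (h : c ≠ 0 ∨ d ≠ 0) : ∀ᵐ t : ℝ, c + d * t ≠ 0 := by
  by_cases hd : d = 0
  · subst hd
    simpa using h
  · have : ∀ᵐ t : ℝ, t ≠ -c / d := by simp [ae_iff]
    filter_upwards [this] with t ht h0
    exact ht (by field_simp; linarith)

lemma bilinear_ae_ne_zero {b0 b1 b2 b3 : ℝ} (h : (b0 ≠ 0 ∨ b1 ≠ 0) ∨ (b2 ≠ 0 ∨ b3 ≠ 0)) :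
    ∀ᵐ q : ℝ × ℝ, (b0 + b1 * q.1) + (b2 + b3 * q.1) * q.2 ≠ 0 := by
  rw [Measure.volume_eq_prod, Measure.ae_prod_iff_ae_ae]
  · have : ∀ᵐ y : ℝ, b0 + b1 * y ≠ 0 ∨ b2 + b3 * y ≠ 0 := by
      rcases h with h | h
      · filter_upwards [affine_ae_ne_zero h] with y hy using Or.inl hy
      · filter_upwards [affine_ae_ne_zero h] with y hy using Or.inr hy
    filter_upwards [this] with y hy using affine_ae_ne_zero hy
  · exact (measurableSet_singleton (0 : ℝ)).compl.preimage (by fun_prop :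
      Measurable fun q : ℝ × ℝ => (b0 + b1 * q.1) + (b2 + b3 * q.1) * q.2)

/-- A nonzero trilinear polynomial vanishes only on a null set. Freezing `x` gives a bilinear
polynomial in `(y, z)` whose four coefficients are affine in `x`, and at least one of them is
not identically zero. -/
lemma triPoly_ae_ne_zero {a : Fin 8 → ℝ} (ha : a ≠ 0) : ∀ᵐ x : V3, triPoly a x ≠ 0 := by
  have key : ∀ᵐ q : ℝ × (Fin 2 → ℝ),
      ((a 0 + a 1 * q.1) + (a 2 + a 4 * q.1) * q.2 0)
        + ((a 3 + a 5 * q.1) + (a 6 + a 7 * q.1) * q.2 0) * q.2 1 ≠ 0 := by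
    rw [Measure.volume_eq_prod, Measure.ae_prod_iff_ae_ae]
    · have h1 : ∀ᵐ x : ℝ, (a 0 + a 1 * x ≠ 0 ∨ a 2 + a 4 * x ≠ 0) ∨
          (a 3 + a 5 * x ≠ 0 ∨ a 6 + a 7 * x ≠ 0) := by
        have hne : ((a 0 ≠ 0 ∨ a 1 ≠ 0) ∨ (a 2 ≠ 0 ∨ a 4 ≠ 0)) ∨
            ((a 3 ≠ 0 ∨ a 5 ≠ 0) ∨ (a 6 ≠ 0 ∨ a 7 ≠ 0)) := by
          by_contra! H
          apply ha
          ext i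
          fin_cases i <;> simp [H]
        rcases hne with (h | h) | (h | h) <;>
          filter_upwards [affine_ae_ne_zero h] with x hx <;> tauto
      filter_upwards [h1] with x hx
      filter_upwards [(volume_preserving_finTwoArrow ℝ).quasiMeasurePreserving.ae
        (bilinear_ae_ne_zero hx)] with q hq
      simpa using hq
    · exact (measurableSet_singleton (0 : ℝ)).compl.preimage (by fun_prop :
        Measurable fun q : ℝ × (Fin 2 → ℝ) =>
          ((a 0 + a 1 * q.1) + (a 2 + a 4 * q.1) * q.2 0)
          + ((a 3 + a 5 * q.1) + (a 6 + a 7 * q.1) * q.2 0) * q.2 1)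
  have mp := (volume_preserving_piFinSuccAbove (fun _ : Fin 3 => ℝ) 0).comp
    (PiLp.volume_preserving_ofLp (Fin 3))
  filter_upwards [mp.quasiMeasurePreserving.ae key] with x hx h0
  apply hx
  rw [← h0]
  simp [triPoly, MeasurableEquiv.piFinSuccAbove, Fin.tail]
  ring

/-! ### Uniform bounds on sublevel sets -/

lemma measurableSet_sublevel (a : Fin 8 → ℝ) (δ : ℝ) :
    MeasurableSet {x ∈ cube 1 | |triPoly a x| ≤ δ} :=
  (isCompact_cube 1).measurableSet.inter
    (isClosed_le (continuous_triPoly a).abs continuous_const).measurableSet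

lemma volume_sublevel_mono {a b : Fin 8 → ℝ} {δ δ' : ℝ}
    (h : ∀ x ∈ cube 1, |triPoly a x| ≤ δ → |triPoly b x| ≤ δ') :
    volume {x ∈ cube 1 | |triPoly a x| ≤ δ} ≤ volume {x ∈ cube 1 | |triPoly b x| ≤ δ'} :=
  measure_mono fun x hx => ⟨hx.1, h x hx.1 hx.2⟩

lemma exists_sublevel {a : Fin 8 → ℝ} (ha : a ≠ 0) {ε : ℝ≥0∞} (hε : 0 < ε) :
    ∃ δ : ℝ, 0 < δ ∧ volume {x ∈ cube 1 | |triPoly a x| ≤ δ} < ε := by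
  have ht := tendsto_measure_iInter_atTop (μ := volume)
    (s := fun n : ℕ => {x ∈ cube 1 | |triPoly a x| ≤ 1 / ((n : ℝ) + 1)})
    (fun n => (measurableSet_sublevel a _).nullMeasurableSet)
    (fun m n hmn x hx => ⟨hx.1, hx.2.trans (one_div_le_one_div_of_le (by positivity)
      (by exact_mod_cast Nat.succ_le_succ hmn))⟩)
    ⟨0, ((measure_mono (Set.sep_subset _ _)).trans_lt (isCompact_cube 1).measure_lt_top).ne⟩
  have h0 : volume (⋂ n : ℕ, {x ∈ cube 1 | |triPoly a x| ≤ 1 / ((n : ℝ) + 1)}) = 0 := by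
    refine measure_mono_null (fun x hx => ?_) (triPoly_ae_ne_zero ha)
    have hx' : ∀ n : ℕ, |triPoly a x| ≤ 1 / ((n : ℝ) + 1) := fun n => (Set.mem_iInter.1 hx n).2
    have : |triPoly a x| ≤ 0 :=
      ge_of_tendsto' tendsto_one_div_add_atTop_nhds_zero_nat hx'
    simpa using this
  rw [h0] at ht
  obtain ⟨n, hn⟩ := (ht.eventually_lt_const hε).exists
  exact ⟨1 / ((n : ℝ) + 1), by positivity, hn⟩

/-- Uniform smallness of the sublevel sets over all normalised trilinear polynomials. -/
lemma exists_uniform_sublevel {ε : ℝ≥0∞} (hε : 0 < ε) :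
    ∃ δ : ℝ, 0 < δ ∧ ∀ a ∈ Metric.sphere (0 : Fin 8 → ℝ) 1,
      volume {x ∈ cube 1 | |triPoly a x| ≤ δ} < ε := by
  refine (isCompact_sphere (0 : Fin 8 → ℝ) 1).induction_on
    (p := fun K => ∃ δ : ℝ, 0 < δ ∧ ∀ a ∈ K, volume {x ∈ cube 1 | |triPoly a x| ≤ δ} < ε)
    ⟨1, one_pos, by simp⟩ ?_ ?_ ?_
  · rintro s t hst ⟨δ, hδ, h⟩
    exact ⟨δ, hδ, fun a ha => h a (hst ha)⟩
  · rintro s t ⟨δ, hδ, h⟩ ⟨δ', hδ', h'⟩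
    refine ⟨min δ δ', lt_min hδ hδ', ?_⟩
    rintro a (ha | ha)
    · exact lt_of_le_of_lt (volume_sublevel_mono fun x _ hx => hx.trans (min_le_left _ _)) (h a ha)
    · exact lt_of_le_of_lt (volume_sublevel_mono fun x _ hx => hx.trans (min_le_right _ _)) (h' a ha)
  · intro a ha
    have ha0 : a ≠ 0 := by
      rintro rfl
      simp at ha
    obtain ⟨δ, hδ, h⟩ := exists_sublevel ha0 hε
    -- On the unit cube, moving `a` by less than `δ / 16` changes the polynomial by at most `δ / 2`.
    refine ⟨Metric.ball a (δ / 16),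
      mem_nhdsWithin_of_mem_nhds (Metric.ball_mem_nhds a (by positivity)),
      δ / 2, by positivity, fun b hb => lt_of_le_of_lt (volume_sublevel_mono fun x hc hx => ?_) h⟩
    have h1 := abs_triPoly_le (a - b) hc
    have h2 : ‖a - b‖ < δ / 16 := by rwa [← dist_eq_norm, dist_comm]
    have h4 : triPoly a x = triPoly (a - b) x + triPoly b x := by rw [triPoly_sub]; ring
    have h5 := abs_add_le (triPoly (a - b) x) (triPoly b x)
    rw [h4]
    linarith

/-! ### The unit cube and scaling -/

/-- The inequality on the unit cube, for squared norms and an arbitrary measurable subset of volume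
at least `γ`. -/
lemma unit_cube_bound {γ : ℝ} (hγ : 0 < γ) :
    ∃ K : ℝ, 0 < K ∧ ∀ S : Set V3, MeasurableSet S → S ⊆ cube 1 → ENNReal.ofReal γ ≤ volume S →
      ∀ a, ∫ x in cube 1, (triPoly a x) ^ 2 ≤ K * ∫ x in S, (triPoly a x) ^ 2 := by
  obtain ⟨δ, hδ, H⟩ := exists_uniform_sublevel (ε := ENNReal.ofReal (γ / 2))
    (ENNReal.ofReal_pos.2 (by positivity))
  set V := volume.real (cube 1) with hV
  have hV0 : 0 ≤ V := measureReal_nonneg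
  refine ⟨128 * (V + 1) / (δ ^ 2 * γ), by positivity, fun S hS hSc hvol a => ?_⟩
  have hI0 : 0 ≤ ∫ x in S, (triPoly a x) ^ 2 := integral_nonneg fun x => sq_nonneg _
  have hint : IntegrableOn (fun x => (triPoly a x) ^ 2) (cube 1) :=
    (((continuous_triPoly a).pow 2).continuousOn).integrableOn_compact (isCompact_cube 1)
  have hup : ∫ x in cube 1, (triPoly a x) ^ 2 ≤ 64 * ‖a‖ ^ 2 * V := by
    refine (le_abs_self _).trans (norm_setIntegral_le_of_norm_le_const (μ := volume)
      (f := fun x => (triPoly a x) ^ 2) (isCompact_cube 1).measure_lt_top fun x hx => ?_)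
    have := abs_triPoly_le a hx
    rw [Real.norm_eq_abs, abs_pow]
    calc |triPoly a x| ^ 2 ≤ (8 * ‖a‖) ^ 2 := by gcongr
      _ = 64 * ‖a‖ ^ 2 := by ring
  have hlow : δ ^ 2 * ‖a‖ ^ 2 * (γ / 2) ≤ ∫ x in S, (triPoly a x) ^ 2 := by
    rcases eq_or_ne a 0 with rfl | ha
    · simpa using hI0
    have hna : 0 < ‖a‖ := norm_pos_iff.2 ha
    set b := ‖a‖⁻¹ • a with hb
    have hbs : b ∈ Metric.sphere (0 : Fin 8 → ℝ) 1 := by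
      simp [hb, norm_smul, hna.ne']
    have hab : ∀ x, triPoly a x = ‖a‖ * triPoly b x := fun x => by
      rw [hb, triPoly_smul, mul_inv_cancel_left₀ hna.ne']
    set N := {x ∈ cube 1 | |triPoly b x| ≤ δ} with hN
    have hNv : volume N < ENNReal.ofReal (γ / 2) := H b hbs
    have hSN : MeasurableSet (S \ N) := hS.diff (measurableSet_sublevel b δ)
    have hSNfin : volume (S \ N) ≠ ∞ :=
      ((measure_mono (Set.sdiff_subset.trans hSc)).trans_lt (isCompact_cube 1).measure_lt_top).ne
    have hge : γ / 2 ≤ volume.real (S \ N) := by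
      have h1 : ENNReal.ofReal (γ / 2) ≤ volume (S \ N) := by
        have h2 : ENNReal.ofReal γ - ENNReal.ofReal (γ / 2) ≤ volume S - volume N :=
          tsub_le_tsub hvol hNv.le
        rw [← ENNReal.ofReal_sub _ (by positivity)] at h2
        rw [show γ - γ / 2 = γ / 2 by ring] at h2
        exact h2.trans le_measure_sdiff
      exact (ENNReal.ofReal_le_iff_le_toReal hSNfin).1 h1
    calc δ ^ 2 * ‖a‖ ^ 2 * (γ / 2) ≤ δ ^ 2 * ‖a‖ ^ 2 * volume.real (S \ N) := by gcongr
      _ ≤ ∫ x in S \ N, (triPoly a x) ^ 2 := by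
        refine setIntegral_ge_of_const_le_real hSN hSNfin (fun x hx => ?_)
          (hint.mono_set (Set.sdiff_subset.trans hSc))
        have hlt : δ < |triPoly b x| := by
          by_contra! hle
          exact hx.2 ⟨hSc hx.1, hle⟩
        rw [hab, mul_pow, mul_comm, ← sq_abs (triPoly b x)]
        gcongr
      _ ≤ ∫ x in S, (triPoly a x) ^ 2 :=
        setIntegral_mono_set (hint.mono_set hSc) (ae_of_all _ fun x => sq_nonneg _)
          Set.sdiff_subset.eventuallyLE
  rw [div_mul_eq_mul_div, le_div_iff₀ (by positivity)]
  calc (∫ x in cube 1, (triPoly a x) ^ 2) * (δ ^ 2 * γ)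
      ≤ (64 * ‖a‖ ^ 2 * V) * (δ ^ 2 * γ) := by gcongr
    _ = 128 * V * (δ ^ 2 * ‖a‖ ^ 2 * (γ / 2)) := by ring
    _ ≤ 128 * (V + 1) * ∫ x in S, (triPoly a x) ^ 2 := by
      gcongr
      linarith

open scoped Pointwise

lemma smul_cube_one {h : ℝ} (hh : 0 < h) : h⁻¹ • cube h = cube 1 := by
  ext x
  rw [Set.mem_inv_smul_set_iff₀ hh.ne']
  simp only [cube, Set.mem_ofPred_eq, PiLp.smul_apply, smul_eq_mul, Set.mem_Icc]
  refine forall_congr' fun i => and_congr ?_ ?_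
  · exact mul_nonneg_iff_of_pos_left hh
  · exact mul_le_iff_le_one_right hh

/-- Norm equivalence of Lemma 4.1: on any subelement `S` of an interface cube containing a
tetrahedron of volume proportional to the element volume, the `L²` norms of trilinear
polynomials over `S` and over the whole cube are equivalent, with constants independent of `h`
and of the position of `S`. -/
theorem norm_equivalence (γ : ℝ) (hγ0 : 0 < γ) (hγ1 : γ ≤ 1) :
    ∃ C : ℝ, 0 < C ∧
      ∀ (h : ℝ), 0 < h →
      ∀ (P S : Set V3), IsTetra P → MeasurableSet S → P ⊆ S → S ⊆ cube h →
        ENNReal.ofReal (γ * h ^ 3) ≤ volume P →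
      ∀ p : V3 → ℝ, IsQ1 p →
        Real.sqrt (∫ X in cube h, (p X) ^ 2) ≤ C * Real.sqrt (∫ X in S, (p X) ^ 2) ∧
        Real.sqrt (∫ X in S, (p X) ^ 2) ≤ Real.sqrt (∫ X in cube h, (p X) ^ 2) := by
  obtain ⟨K, hK, H⟩ := unit_cube_bound hγ0
  refine ⟨Real.sqrt K, Real.sqrt_pos.2 hK, ?_⟩
  intro h hh P S _ hS hPS hSc hvol p hp
  obtain ⟨a₀, a₁, a₂, a₃, a₄, a₅, a₆, a₇, hp⟩ := hp
  -- The coefficients of the rescaled polynomial `X ↦ p (h X)`.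
  set b : Fin 8 → ℝ := ![a₀, a₁ * h, a₂ * h, a₃ * h, a₄ * h ^ 2, a₅ * h ^ 2, a₆ * h ^ 2,
    a₇ * h ^ 3] with hb
  have hpb : ∀ x, p (h • x) = triPoly b x := fun x => by
    rw [hp]
    simp [triPoly, hb]
    ring
  have hpc : Continuous p := by
    rw [funext hp]
    fun_prop
  have hint : IntegrableOn (fun x => (p x) ^ 2) (cube h) :=
    ((hpc.pow 2).continuousOn).integrableOn_compact (isCompact_cube h)
  have hscale : ∀ A : Set V3, ∫ x in h⁻¹ • A, (triPoly b x) ^ 2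
      = (h ^ 3)⁻¹ * ∫ x in A, (p x) ^ 2 := fun A => by
    have := Measure.setIntegral_comp_smul_of_pos (volume : Measure V3) (fun x => (p x) ^ 2)
      (h⁻¹ • A) hh
    rw [smul_inv_smul₀ hh.ne'] at this
    simpa [hpb] using this
  constructor
  · rw [← Real.sqrt_mul hK.le]
    apply Real.sqrt_le_sqrt
    have hv : ENNReal.ofReal γ ≤ volume (h⁻¹ • S) := by
      rw [Measure.addHaar_smul]
      calc ENNReal.ofReal γ = ENNReal.ofReal ((h ^ 3)⁻¹) * ENNReal.ofReal (γ * h ^ 3) := by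
            rw [← ENNReal.ofReal_mul (by positivity)]
            congr 1
            field_simp
        _ ≤ ENNReal.ofReal ((h ^ 3)⁻¹) * volume S := by
            gcongr
            exact hvol.trans (measure_mono hPS)
        _ = _ := by
            congr 2
            simp [abs_of_pos hh]
    have key := H (h⁻¹ • S) (hS.const_smul₀ _)
      (by rw [← smul_cube_one hh]; exact Set.smul_set_mono hSc) hv b
    rw [← smul_cube_one hh, hscale, hscale, mul_left_comm] at key
    exact le_of_mul_le_mul_left key (by positivity)
  · exact Real.sqrt_le_sqrt (setIntegral_mono_set hint (ae_of_all _ fun x => sq_nonneg _)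
      hSc.eventuallyLE)
end
end

section
/- There is an absolute constant C such that the following holds. Let K ⊆ ℝ³ be a pyramid with a convex polygonal base B having N_B edges; that is, B is a convex polygon with N_B edges contained in a plane, a is a point not lying in that plane, K is the convex hull of B ∪ {a}, and vol(K) > 0. Then for every p ∈ Q₁ and every X₀ ∈ B: |p(X₀)| ≤ C N_B^{1/2} vol(K)^{−1/2} ‖p‖_{L²(K)}. (This is Lemma 4.2, the point-evaluation trace inequality on a pyramid, with constant independent of the shape of the pyramid.) -/
/-!
Only convexity of `K` and `X₀ ∈ K` matter. Restricted to the segment from `X₀` to `X`, a function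
`p ∈ Q₁` is a cubic polynomial in the parameter `t`, so `p X₀`, its value at `t = 0`, is the fixed
combination of its values at `t = 1/4, 1/2, 3/4, 1` given by the vanishing of fourth differences
(`IsQ1.extrapolate`). Squaring and integrating over `X ∈ K` bounds `vol(K) p(X₀)²` by a sum of
the integrals `∫_K p(X₀ + t (X - X₀))² dX`. The contraction `X ↦ X₀ + t (X - X₀)` maps `K` into
itself and scales volume by `t³`, so each of these is at most `t⁻³ ∫_K p²`
(`setIntegral_contraction_le`). The constant so obtained does not depend on `K`, and
`1 ≤ N^{1/2}` finishes the proof.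
-/

open MeasureTheory
open scoped RealInnerProductSpace ENNReal

noncomputable section

lemma IsQ1.continuous {p : V3 → ℝ} (hp : IsQ1 p) : Continuous p := by
  obtain ⟨a₀, a₁, a₂, a₃, a₄, a₅, a₆, a₇, h⟩ := hp
  rw [funext h]
  fun_prop

/-- Cubic extrapolation to `X₀` along the segment from `X₀` to `X`: the fourth difference of
`t ↦ p (t • X + (1 - t) • X₀)` with step `1/4` vanishes. -/
lemma IsQ1.extrapolate {p : V3 → ℝ} (hp : IsQ1 p) (X₀ X : V3) :
    p X₀ = 4 * p ((1 / 4 : ℝ) • X + (1 - 1 / 4 : ℝ) • X₀)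
      - 6 * p ((1 / 2 : ℝ) • X + (1 - 1 / 2 : ℝ) • X₀)
      + 4 * p ((3 / 4 : ℝ) • X + (1 - 3 / 4 : ℝ) • X₀) - p X := by
  obtain ⟨a₀, a₁, a₂, a₃, a₄, a₅, a₆, a₇, h⟩ := hp
  simp only [h, PiLp.add_apply, PiLp.smul_apply, smul_eq_mul]
  ring

lemma setIntegral_contraction_le {K : Set V3} (hK : IsCompact K) (hc : Convex ℝ K)
    {p : V3 → ℝ} (hp : Continuous p) {X₀ : V3} (hX : X₀ ∈ K) {t : ℝ} (ht : 0 < t) (ht1 : t ≤ 1) :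
    ∫ X in K, (p (t • X + (1 - t) • X₀)) ^ 2 ≤ (t ^ 3)⁻¹ * ∫ X in K, (p X) ^ 2 := by
  have h1 := Measure.setIntegral_comp_smul_of_pos (volume : Measure V3)
    (fun y => (p (y + (1 - t) • X₀)) ^ 2) K ht
  simp only [finrank_euclideanSpace, Fintype.card_fin, smul_eq_mul] at h1
  rw [h1]
  refine mul_le_mul_of_nonneg_left ?_ (by positivity)
  have h2 := (measurePreserving_add_right (volume : Measure V3)
    ((1 - t) • X₀)).setIntegral_preimage_emb (measurableEmbedding_addRight _)
    (fun y => (p y) ^ 2) K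
  rw [← h2]
  have hK' : IsCompact ((fun y : V3 => y + (1 - t) • X₀) ⁻¹' K) :=
    (Homeomorph.addRight ((1 - t) • X₀)).isCompact_preimage.2 hK
  refine setIntegral_mono_set ?_ (ae_of_all _ fun y => sq_nonneg _) ?_
  · exact (by fun_prop : Continuous fun y => (p (y + (1 - t) • X₀)) ^ 2).continuousOn
      |>.integrableOn_compact hK'
  · refine LE.le.eventuallyLE ?_
    rintro _ ⟨x, hx, rfl⟩
    exact hc hx hX ht.le (by linarith) (by ring)

/-- The pointwise bound on an arbitrary compact convex set; `5329 = 73²`, and the sharp outcome of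
the argument is `69 (64 + 8 + 64 / 27 + 1)`, where `69 = 4² + 6² + 4² + 1²`. -/
lemma IsQ1.sq_mul_volume_le {K : Set V3} (hK : IsCompact K) (hc : Convex ℝ K)
    {p : V3 → ℝ} (hp : IsQ1 p) {X₀ : V3} (hX : X₀ ∈ K) :
    (p X₀) ^ 2 * (volume K).toReal ≤ 5329 * ∫ X in K, (p X) ^ 2 := by
  have hpc := hp.continuous
  have hint {f : V3 → ℝ} (hf : Continuous f) : Integrable f (volume.restrict K) :=
    hf.continuousOn.integrableOn_compact hK
  have hle : ∫ _ in K, (p X₀) ^ 2 ≤ ∫ X in K,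
      (69 * (p ((1 / 4 : ℝ) • X + (1 - 1 / 4 : ℝ) • X₀)) ^ 2
      + 69 * (p ((1 / 2 : ℝ) • X + (1 - 1 / 2 : ℝ) • X₀)) ^ 2
      + 69 * (p ((3 / 4 : ℝ) • X + (1 - 3 / 4 : ℝ) • X₀)) ^ 2 + 69 * (p X) ^ 2) := by
    refine integral_mono (hint (by fun_prop)) (hint (by fun_prop)) fun X => ?_
    have h := hp.extrapolate X₀ X
    generalize p X₀ = q at h ⊢
    generalize p ((1 / 4 : ℝ) • X + (1 - 1 / 4 : ℝ) • X₀) = x at h ⊢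
    generalize p ((1 / 2 : ℝ) • X + (1 - 1 / 2 : ℝ) • X₀) = y at h ⊢
    generalize p ((3 / 4 : ℝ) • X + (1 - 3 / 4 : ℝ) • X₀) = z at h ⊢
    generalize p X = u at h ⊢
    subst h
    -- Cauchy–Schwarz for the coefficient vector `(4, -6, 4, -1)`, via Lagrange's identity.
    nlinarith [sq_nonneg (6 * x + 4 * y), sq_nonneg (4 * x - 4 * z), sq_nonneg (x + 4 * u),
      sq_nonneg (4 * y + 6 * z), sq_nonneg (y - 6 * u), sq_nonneg (z + 4 * u)]
  rw [integral_add (hint (by fun_prop)) (hint (by fun_prop)),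
    integral_add (hint (by fun_prop)) (hint (by fun_prop)),
    integral_add (hint (by fun_prop)) (hint (by fun_prop))] at hle
  simp only [integral_const_mul, setIntegral_const, smul_eq_mul, Measure.real] at hle
  have h1 := setIntegral_contraction_le hK hc hpc hX (t := 1 / 4) (by norm_num) (by norm_num)
  have h2 := setIntegral_contraction_le hK hc hpc hX (t := 1 / 2) (by norm_num) (by norm_num)
  have h3 := setIntegral_contraction_le hK hc hpc hX (t := 3 / 4) (by norm_num) (by norm_num)
  have h0 : 0 ≤ ∫ X in K, (p X) ^ 2 := integral_nonneg fun X => sq_nonneg _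
  norm_num at h1 h2 h3 hle ⊢
  linarith

/-- Lemma 4.2: the point-evaluation trace inequality on a pyramid `K` over a convex polygonal
base `B` with `N_B` edges (equivalently, `N_B` vertices), with a constant independent of the
shape of the pyramid: `|p(X₀)| ≤ C N_B^{1/2} vol(K)^{−1/2} ‖p‖_{L²(K)}` for `p ∈ Q₁, X₀ ∈ B`. -/
theorem pyramid_point_trace :
    ∃ C : ℝ, 0 < C ∧
      ∀ (N : ℕ), 3 ≤ N →
      ∀ (w : Fin N → V3) (a m : V3) (c : ℝ), ‖m‖ = 1 →
        (∀ i, ⟪w i, m⟫ = c) →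
        Function.Injective w →
        (∀ i, w i ∈ Set.extremePoints ℝ (convexHull ℝ (Set.range w))) →
        ⟪a, m⟫ ≠ c →
      ∀ (B K : Set V3), B = convexHull ℝ (Set.range w) →
        K = convexHull ℝ (insert a (Set.range w)) →
        0 < volume K →
      ∀ p : V3 → ℝ, IsQ1 p → ∀ X₀ ∈ B,
        |p X₀| ≤ C * Real.sqrt N * (Real.sqrt (volume K).toReal)⁻¹ *
          Real.sqrt (∫ X in K, (p X) ^ 2) := by
  refine ⟨73, by norm_num, ?_⟩
  intro N hN w a m c _ _ _ _ _ B K hB hKdef hvol p hp X₀ hX₀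
  have hK : IsCompact K := by
    rw [hKdef]
    exact ((Set.finite_range w).insert a).isCompact_convexHull ℝ
  have hc : Convex ℝ K := hKdef ▸ convex_convexHull ℝ _
  have hX : X₀ ∈ K := by
    rw [hKdef]
    rw [hB] at hX₀
    exact convexHull_mono (Set.subset_insert _ _) hX₀
  have hmain := hp.sq_mul_volume_le hK hc hX
  have hV : 0 < (volume K).toReal := ENNReal.toReal_pos hvol.ne' hK.measure_lt_top.ne
  set V := (volume K).toReal
  set I := ∫ X in K, (p X) ^ 2
  have hN1 : 1 ≤ Real.sqrt N := Real.one_le_sqrt.2 (by exact_mod_cast (by omega : 1 ≤ N))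
  have hbound : |p X₀| ≤ 73 * (Real.sqrt V)⁻¹ * Real.sqrt I := by
    have h : |p X₀| * Real.sqrt V ≤ 73 * Real.sqrt I := by
      rw [← Real.sqrt_sq_eq_abs, ← Real.sqrt_mul (sq_nonneg _),
        show (73 : ℝ) = Real.sqrt 5329 by
          rw [show (5329 : ℝ) = 73 ^ 2 by norm_num, Real.sqrt_sq (by norm_num)],
        ← Real.sqrt_mul (by norm_num)]
      exact Real.sqrt_le_sqrt hmain
    have hs : 0 < Real.sqrt V := Real.sqrt_pos.2 hV
    calc |p X₀| ≤ 73 * Real.sqrt I / Real.sqrt V := (le_div_iff₀ hs).2 h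
      _ = 73 * (Real.sqrt V)⁻¹ * Real.sqrt I := by ring
  calc |p X₀| ≤ 73 * (Real.sqrt V)⁻¹ * Real.sqrt I := hbound
    _ ≤ Real.sqrt N * (73 * (Real.sqrt V)⁻¹ * Real.sqrt I) :=
        le_mul_of_one_le_left (by positivity) hN1
    _ = 73 * Real.sqrt N * (Real.sqrt V)⁻¹ * Real.sqrt I := by ring
end
end

section
/- Fix F ∈ ℝ³, a unit vector n̄ ∈ ℝ³, and β⁻, β⁺ > 0. Suppose p, q ∈ Q₁ satisfy the approximate jump conditions (3.3): (i) q(X) = p(X) for every X in the plane τ = {X ∈ ℝ³ : (X − F)·n̄ = 0}; (ii) the coefficients of xy, xz, yz and xyz in q equal those in p; (iii) β⁻ ∇p(F)·n̄ = β⁺ ∇q(F)·n̄. Then q = C_T(p). Hence for each p ∈ Q₁, C_T(p) is the unique element of Q₁ that together with p satisfies the approximate jump conditions, i.e., the local trilinear IFE space is exactly S_h(T) = {φ : φ|_{T⁻} = p, φ|_{T⁺} = C_T(p), p ∈ Q₁}. -/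
/-!
By the coefficient condition the trilinear parts of `p` and `q` cancel, so `q - p` is an affine
function. It vanishes on the plane `τ`, and every point `X` is a point of `τ` plus `L(X) n̄`
(because `n̄` is a unit vector), so `q - p = k L` for a constant `k`. Differentiating at `F` in the
direction `n̄` gives `∇q(F)·n̄ = ∇p(F)·n̄ + k`, and the flux condition then forces
`k = (β⁻/β⁺ - 1) ∇p(F)·n̄`.
-/

open MeasureTheory
open scoped RealInnerProductSpace ENNReal

noncomputable section

lemma IsQ1.differentiable {p : V3 → ℝ} (hp : IsQ1 p) : Differentiable ℝ p := by
  obtain ⟨a₀, a₁, a₂, a₃, a₄, a₅, a₆, a₇, h⟩ := hp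
  rw [funext h]
  fun_prop

/-- The normal derivative of `L(X) = (X - F)·n̄` is `‖n̄‖² = 1`, so adding `k L` to `p` adds `k` to
the normal derivative. -/
lemma fderiv_add_const_mul_inner {p : V3 → ℝ} {F nbar : V3} (hn : ‖nbar‖ = 1)
    (hp : DifferentiableAt ℝ p F) (k : ℝ) :
    fderiv ℝ (fun X => p X + k * ⟪X - F, nbar⟫) F nbar = fderiv ℝ p F nbar + k := by
  have hL : HasFDerivAt (fun X : V3 => ⟪X - F, nbar⟫) (innerSL ℝ nbar) F := by
    have h := (innerSL ℝ nbar).hasFDerivAt (x := F) |>.sub_const (innerSL ℝ nbar F)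
    refine h.congr_of_eventuallyEq (Filter.Eventually.of_forall fun X => ?_)
    simp only [innerSL_apply_apply, real_inner_comm nbar, inner_sub_right]
  rw [(hp.hasFDerivAt.fun_add (hL.const_mul k)).fderiv]
  simp [hn]

/-- An affine function (in coordinates) vanishing on the plane through `F` orthogonal to the unit
vector `n̄` is a multiple of `L(X) = (X - F)·n̄`. -/
lemma affine_eq_const_mul_inner {F nbar : V3} (hn : ‖nbar‖ = 1) {d : V3 → ℝ} {e₀ e₁ e₂ e₃ : ℝ}
    (hd : ∀ x : V3, d x = e₀ + e₁ * x 0 + e₂ * x 1 + e₃ * x 2)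
    (hplane : ∀ X : V3, ⟪X - F, nbar⟫ = 0 → d X = 0) :
    ∃ k : ℝ, ∀ X : V3, d X = k * ⟪X - F, nbar⟫ := by
  refine ⟨e₁ * nbar 0 + e₂ * nbar 1 + e₃ * nbar 2, fun X => ?_⟩
  -- the orthogonal projection of `X` onto the plane is a zero of `d`
  have h := hplane (X - ⟪X - F, nbar⟫ • nbar) (by
    rw [sub_right_comm, inner_sub_left (X - F), real_inner_smul_left,
      real_inner_self_eq_norm_sq, hn]
    ring)
  rw [hd] at h ⊢
  simp only [PiLp.sub_apply, PiLp.smul_apply, smul_eq_mul] at h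
  linear_combination h

/-- Uniqueness: if `p, q ∈ Q₁` satisfy the approximate jump conditions (3.3) — (i) `q = p` on
the plane `τ = {X : (X−F)·n̄ = 0}`, (ii) the coefficients of `xy, xz, yz, xyz` of `q` equal
those of `p`, (iii) `β⁻ ∇p(F)·n̄ = β⁺ ∇q(F)·n̄` — then `q = C_T(p)`.  Hence the local trilinear
IFE space is exactly `S_h(T) = {φ : φ|_{T⁻} = p, φ|_{T⁺} = C_T(p), p ∈ Q₁}`. -/
theorem CT_uniqueness (F nbar : V3) (hn : ‖nbar‖ = 1)
    (βm βp : ℝ) (hβm : 0 < βm) (hβp : 0 < βp)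
    (p q : V3 → ℝ) (hp : IsQ1 p) (hq : IsQ1 q)
    (hplane : ∀ X : V3, ⟪X - F, nbar⟫ = 0 → q X = p X)
    (hcoeff : ∃ a₄ a₅ a₆ a₇ : ℝ,
      (∃ a₀ a₁ a₂ a₃ : ℝ, ∀ x : V3, p x = a₀ + a₁ * x 0 + a₂ * x 1 + a₃ * x 2
          + a₄ * (x 0 * x 1) + a₅ * (x 0 * x 2) + a₆ * (x 1 * x 2)
          + a₇ * (x 0 * x 1 * x 2)) ∧
      (∃ b₀ b₁ b₂ b₃ : ℝ, ∀ x : V3, q x = b₀ + b₁ * x 0 + b₂ * x 1 + b₃ * x 2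
          + a₄ * (x 0 * x 1) + a₅ * (x 0 * x 2) + a₆ * (x 1 * x 2)
          + a₇ * (x 0 * x 1 * x 2)))
    (hflux : βm * fderiv ℝ p F nbar = βp * fderiv ℝ q F nbar) :
    q = CT βm βp F nbar p := by
  obtain ⟨a₄, a₅, a₆, a₇, ⟨a₀, a₁, a₂, a₃, ha⟩, ⟨b₀, b₁, b₂, b₃, hb⟩⟩ := hcoeff
  obtain ⟨k, hk⟩ := affine_eq_const_mul_inner hn (F := F) (d := fun X => q X - p X)
    (e₀ := b₀ - a₀) (e₁ := b₁ - a₁) (e₂ := b₂ - a₂) (e₃ := b₃ - a₃)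
    (fun x => by rw [ha, hb]; ring) (fun X hX => sub_eq_zero.mpr (hplane X hX))
  have hqk : q = fun X => p X + k * ⟪X - F, nbar⟫ :=
    funext fun X => by linear_combination hk X
  rw [hqk, fderiv_add_const_mul_inner hn hp.differentiable.differentiableAt] at hflux
  have hkval : k = (βm / βp - 1) * fderiv ℝ p F nbar := by
    field_simp
    linear_combination -hflux
  rw [hqk, hkval]
  rfl
end
end
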